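/- For every k ≥ 2, the (non-context-free) language L = { a_1^n a_2^n ⋯ a_{k+1}^n | n ≥ 1 } over the alphabet {a_1,…,a_{k+1}} belongs both to L(CD_2, CF−λ, (t∧≥k)) and to L(CD_2, CF−λ, (t∧=k)), i.e., it is generated by a CD grammar system with two λ-free context-free components working in the (t∧≥k)-mode, and also by one working in the (t∧=k)-mode. -/

import Mathlib

namespace CDHybrid

/-- Symbols: nonterminals are natural numbers, terminals come from `T`. -/
abbrev Symb (T : Type) := ℕ ⊕ T

/-- Sentential forms. -/
abbrev SForm (T : Type) := List (Symb T)

/-- A context-free rule `A → z`. -/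
abbrev Rule (T : Type) := ℕ × SForm T

/-- Number of nonterminal occurrences in a sentential form. -/
def ntCount {T : Type} (x : SForm T) : ℕ := (x.filter Sum.isLeft).length

/-- One rewriting step using some rule of the rule set `P`. -/
def RStep {T : Type} (P : List (Rule T)) (x y : SForm T) : Prop :=
  ∃ r ∈ P, ∃ u v : SForm T, x = u ++ Sum.inl r.1 :: v ∧ y = u ++ r.2 ++ v

/-- `m`-step derivation using only rules of `P`. -/
def StepsN {T : Type} (P : List (Rule T)) : ℕ → SForm T → SForm T → Prop
  | 0, x, y => x = y
  | m + 1, x, y => ∃ z, RStep P x z ∧ StepsN P m z y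

/-- `m`-step derivation using only rules of `P`, all intermediate (and the final)
sentential forms having at most `b` occurrences of nonterminals. -/
def StepsNB {T : Type} (P : List (Rule T)) (b : ℕ) : ℕ → SForm T → SForm T → Prop
  | 0, x, y => x = y
  | m + 1, x, y => ∃ z, RStep P x z ∧ ntCount z ≤ b ∧ StepsNB P b m z y

/-- Derivation modes of CD grammar systems. -/
inductive Mode where
  | eq : ℕ → Mode
  | le : ℕ → Mode
  | ge : ℕ → Mode
  | star : Mode
  | t : Mode
  | conj : Mode → Mode → Mode

/-- The predicate of a derivation mode: `modeOK P f m y` holds if an `m`-step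
derivation by the component `P` ending in `y` is acceptable for mode `f`. -/
def modeOK {T : Type} (P : List (Rule T)) : Mode → ℕ → SForm T → Prop
  | .eq k, m, _ => m = k
  | .le k, m, _ => m ≤ k
  | .ge k, m, _ => k ≤ m
  | .star, _, _ => True
  | .t, _, y => ¬ ∃ z, RStep P y z
  | .conj f g, m, y => modeOK P f m y ∧ modeOK P g m y

/-- A CD grammar system with context-free components. -/
structure CDGS (T : Type) where
  deg : ℕ
  start : ℕ
  comp : Fin deg → List (Rule T)

/-- λ-freeness: no erasing rules. -/
def CDGS.LamFree {T : Type} (G : CDGS T) : Prop :=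
  ∀ i : Fin G.deg, ∀ r ∈ G.comp i, r.2 ≠ []

/-- One derivation step of a component of `G` in mode `f`. -/
def CDGS.ModeStep {T : Type} (G : CDGS T) (f : Mode) (x y : SForm T) : Prop :=
  ∃ i : Fin G.deg, ∃ m : ℕ, StepsN (G.comp i) m x y ∧ modeOK (G.comp i) f m y

/-- One derivation step of a component of `G` in mode `f`, with all produced
sentential forms having at most `b` nonterminal occurrences. -/
def CDGS.ModeStepB {T : Type} (G : CDGS T) (f : Mode) (b : ℕ) (x y : SForm T) : Prop :=
  ∃ i : Fin G.deg, ∃ m : ℕ, StepsNB (G.comp i) b m x y ∧ modeOK (G.comp i) f m y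

/-- The language generated by `G` in mode `f`. -/
def CDGS.lang {T : Type} (G : CDGS T) (f : Mode) : Set (List T) :=
  { w | Relation.TransGen (G.ModeStep f) [Sum.inl G.start] (w.map Sum.inr) }

/-- The words of the language of `G` in mode `f` possessing a derivation of index
at most `b`, i.e., all sentential forms occurring in it have at most `b`
nonterminal occurrences. -/
def CDGS.langB {T : Type} (G : CDGS T) (f : Mode) (b : ℕ) : Set (List T) :=
  { w | ntCount ([Sum.inl G.start] : SForm T) ≤ b ∧
      Relation.TransGen (G.ModeStepB f b) [Sum.inl G.start] (w.map Sum.inr) }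

/-- Two languages are considered equal iff they differ at most in the empty word. -/
def EqL {T : Type} (L₁ L₂ : Set (List T)) : Prop := L₁ \ {[]} = L₂ \ {[]}

/-- The family `L(CD_n, CF[−λ], f)`; `lf = true` forbids erasing rules. -/
def CDFam (T : Type) (lf : Bool) (n : ℕ) (f : Mode) : Set (Set (List T)) :=
  { L | ∃ G : CDGS T, G.deg ≤ n ∧ (lf = true → G.LamFree) ∧ EqL (G.lang f) L }

/-- The family `L(CD_∞, CF[−λ], f)`. -/
def CDFamInf (T : Type) (lf : Bool) (f : Mode) : Set (Set (List T)) :=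
  { L | ∃ G : CDGS T, (lf = true → G.LamFree) ∧ EqL (G.lang f) L }

/-- The family `L_m(CD_n, CF[−λ], f)` of such languages of index at most `m`. -/
def CDFamInd (T : Type) (lf : Bool) (n : ℕ) (f : Mode) (m : ℕ) : Set (Set (List T)) :=
  { L | ∃ G : CDGS T, G.deg ≤ n ∧ (lf = true → G.LamFree) ∧ EqL (G.lang f) L ∧
      G.lang f ⊆ G.langB f m }

/-- The family `L_m(CD_∞, CF[−λ], f)`. -/
def CDFamIndInf (T : Type) (lf : Bool) (f : Mode) (m : ℕ) : Set (Set (List T)) :=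
  { L | ∃ G : CDGS T, (lf = true → G.LamFree) ∧ EqL (G.lang f) L ∧ G.lang f ⊆ G.langB f m }

/-- The family `L_fin(CD_∞, CF[−λ], f)`. -/
def CDFamFinInf (T : Type) (lf : Bool) (f : Mode) : Set (Set (List T)) :=
  { L | ∃ m : ℕ, 1 ≤ m ∧ L ∈ CDFamIndInf T lf f m }

/-- A context-free grammar. -/
structure CFG (T : Type) where
  start : ℕ
  rules : List (Rule T)

/-- The language generated by a context-free grammar. -/
def CFG.lang {T : Type} (G : CFG T) : Set (List T) :=
  { w | Relation.ReflTransGen (RStep G.rules) [Sum.inl G.start] (w.map Sum.inr) }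

/-- The words of `G.lang` having a derivation of index at most `m`. -/
def CFG.langB {T : Type} (G : CFG T) (m : ℕ) : Set (List T) :=
  { w | ntCount ([Sum.inl G.start] : SForm T) ≤ m ∧
      Relation.ReflTransGen (fun x y => RStep G.rules x y ∧ ntCount y ≤ m)
        [Sum.inl G.start] (w.map Sum.inr) }

/-- The family `L(CF)` of context-free languages. -/
def CFFam (T : Type) : Set (Set (List T)) := { L | ∃ G : CFG T, EqL G.lang L }

/-- The family `L_m(CF)` of context-free languages of index at most `m`. -/
def CFFamInd (T : Type) (m : ℕ) : Set (Set (List T)) :=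
  { L | ∃ G : CFG T, EqL G.lang L ∧ G.lang ⊆ G.langB m }

/-- The family `L_fin(CF)` of context-free languages of finite index. -/
def CFFamFin (T : Type) : Set (Set (List T)) :=
  { L | ∃ m : ℕ, 1 ≤ m ∧ L ∈ CFFamInd T m }

/-- A grammar is linear if every right-hand side contains at most one nonterminal. -/
def CFG.Linear {T : Type} (G : CFG T) : Prop := ∀ r ∈ G.rules, ntCount r.2 ≤ 1

/-- The family `L(LIN)` of linear context-free languages. -/
def LinFam (T : Type) : Set (Set (List T)) :=
  { L | ∃ G : CFG T, G.Linear ∧ EqL G.lang L }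

/-- The family `L(FIN)` of finite languages. -/
def FinFam (T : Type) : Set (Set (List T)) := { L | L.Finite }

/-- A programmed grammar with context-free rules. -/
structure PG (T : Type) where
  start : ℕ
  nLab : ℕ
  rule : Fin nLab → Rule T
  succ : Fin nLab → Set (Fin nLab)
  fail : Fin nLab → Set (Fin nLab)

def PG.LamFree {T : Type} (G : PG T) : Prop := ∀ r : Fin G.nLab, (G.rule r).2 ≠ []

/-- No appearance checking: all failure fields are empty. -/
def PG.NoAC {T : Type} (G : PG T) : Prop := ∀ r : Fin G.nLab, G.fail r = ∅

/-- One step of a programmed grammar on pairs (sentential form, label). -/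
def PG.PStep {T : Type} (G : PG T) (p q : SForm T × Fin G.nLab) : Prop :=
  (∃ u v : SForm T, p.1 = u ++ Sum.inl (G.rule p.2).1 :: v ∧
      q.1 = u ++ (G.rule p.2).2 ++ v ∧ q.2 ∈ G.succ p.2) ∨
  (Sum.inl (G.rule p.2).1 ∉ p.1 ∧ q.1 = p.1 ∧ q.2 ∈ G.fail p.2)

/-- The language generated by a programmed grammar. -/
def PG.lang {T : Type} (G : PG T) : Set (List T) :=
  { w | ∃ r₁ r₂ : Fin G.nLab,
      Relation.ReflTransGen G.PStep ([Sum.inl G.start], r₁) (w.map Sum.inr, r₂) }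

/-- The words of `G.lang` having a derivation of index at most `m`. -/
def PG.langB {T : Type} (G : PG T) (m : ℕ) : Set (List T) :=
  { w | ∃ r₁ r₂ : Fin G.nLab, ntCount ([Sum.inl G.start] : SForm T) ≤ m ∧
      Relation.ReflTransGen (fun p q => G.PStep p q ∧ ntCount q.1 ≤ m)
        ([Sum.inl G.start], r₁) (w.map Sum.inr, r₂) }

/-- The family `L_m(P, CF[−λ][, ac])`: programmed languages of index at most `m`;
`ac = false` forbids appearance checking, `lf = true` forbids erasing rules. -/
def PFamInd (T : Type) (lf ac : Bool) (m : ℕ) : Set (Set (List T)) :=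
  { L | ∃ G : PG T, (lf = true → G.LamFree) ∧ (ac = false → G.NoAC) ∧
      EqL G.lang L ∧ G.lang ⊆ G.langB m }

/-- The family `L_fin(P, CF[−λ][, ac])` of programmed languages of finite index. -/
def PFamFin (T : Type) (lf ac : Bool) : Set (Set (List T)) :=
  { L | ∃ m : ℕ, 1 ≤ m ∧ L ∈ PFamInd T lf ac m }


/-- The word a_1^n a_2^n ⋯ a_{k+1}^n, where a_j is encoded as the letter j-1 ∈ ℕ. -/
def blockWord (k n : ℕ) : List ℕ :=
  (List.range (k + 1)).flatMap (fun j => List.replicate n j)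

/-- The language { a_1^n a_2^n ⋯ a_{k+1}^n | n ≥ 1 }. -/
def blockLang (k : ℕ) : Set (List ℕ) := { w | ∃ n : ℕ, 1 ≤ n ∧ w = blockWord k n }


/-! Part 1: not context-free. -/

inductive Gen {T : Type} (P : List (Rule T)) : SForm T → List T → Prop
  | nil : Gen P [] []
  | term (t : T) (α : SForm T) (w : List T) : Gen P α w → Gen P (Sum.inr t :: α) (t :: w)
  | nt (A : ℕ) (β α : SForm T) (x w : List T) : (A, β) ∈ P → Gen P β x → Gen P α w →
      Gen P (Sum.inl A :: α) (x ++ w)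

theorem Gen.append {T : Type} {P : List (Rule T)} {α β : SForm T} {x y : List T}
    (h : Gen P α x) (h' : Gen P β y) : Gen P (α ++ β) (x ++ y) := by
  induction h with
  | nil => simpa
  | term t α w _ ih => exact Gen.term t _ _ ih
  | nt A β α x w hr hb _ _ ih =>
    rw [List.append_assoc]
    exact Gen.nt A β _ x _ hr hb ih

theorem Gen.split {T : Type} {P : List (Rule T)} (α β : SForm T) (w : List T)
    (h : Gen P (α ++ β) w) : ∃ x y, w = x ++ y ∧ Gen P α x ∧ Gen P β y := by
  induction α generalizing w with
  | nil => exact ⟨[], w, rfl, Gen.nil, h⟩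
  | cons a α ih =>
    rw [List.cons_append] at h
    cases h with
    | term t _ w h =>
      obtain ⟨x, y, rfl, h1, h2⟩ := ih _ h
      exact ⟨t :: x, y, rfl, Gen.term _ _ _ h1, h2⟩
    | nt A γ _ z w hr hb h =>
      obtain ⟨x, y, rfl, h1, h2⟩ := ih _ h
      exact ⟨z ++ x, y, by simp, Gen.nt _ _ _ _ _ hr hb h1, h2⟩

theorem Gen.word {T : Type} {P : List (Rule T)} (w : List T) : Gen P (w.map Sum.inr) w := by
  induction w with
  | nil => exact Gen.nil
  | cons a w ih => exact Gen.term _ _ _ ih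

theorem Gen.of_rstep {T : Type} {P : List (Rule T)} {α β : SForm T} {w : List T}
    (h : RStep P α β) (hw : Gen P β w) : Gen P α w := by
  obtain ⟨r, hr, u, v, rfl, rfl⟩ := h
  rw [List.append_assoc] at hw
  obtain ⟨x, y, rfl, h1, h2⟩ := Gen.split _ _ _ hw
  obtain ⟨y, z, rfl, h2, h3⟩ := Gen.split _ _ _ h2
  exact h1.append (Gen.nt _ _ _ _ _ hr h2 h3)

theorem Gen.of_steps {T : Type} {P : List (Rule T)} {α : SForm T} {w : List T}
    (h : Relation.ReflTransGen (RStep P) α (w.map Sum.inr)) : Gen P α w := by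
  induction h using Relation.ReflTransGen.head_induction_on with
  | refl => exact Gen.word w
  | head h _ ih => exact ih.of_rstep h

theorem RStep.ctx {T : Type} {P : List (Rule T)} {x y : SForm T} (u v : SForm T)
    (h : RStep P x y) : RStep P (u ++ x ++ v) (u ++ y ++ v) := by
  obtain ⟨r, hr, a, b, rfl, rfl⟩ := h
  exact ⟨r, hr, u ++ a, b ++ v, by simp, by simp⟩

theorem steps_ctx {T : Type} {P : List (Rule T)} {x y : SForm T} (u v : SForm T)
    (h : Relation.ReflTransGen (RStep P) x y) :
    Relation.ReflTransGen (RStep P) (u ++ x ++ v) (u ++ y ++ v) := by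
  induction h with
  | refl => exact .refl
  | tail _ h ih => exact ih.tail (h.ctx u v)

theorem Gen.steps {T : Type} {P : List (Rule T)} {α : SForm T} {w : List T}
    (h : Gen P α w) : Relation.ReflTransGen (RStep P) α (w.map Sum.inr) := by
  induction h with
  | nil => exact .refl
  | term t α w _ ih => simpa using steps_ctx [Sum.inr t] [] ih
  | nt A β α x w hr _ _ ih1 ih2 =>
    have s1 : RStep P (Sum.inl A :: α) (β ++ α) := ⟨(A, β), hr, [], α, by simp, by simp⟩
    have s2 := steps_ctx [] α ih1
    have s3 := steps_ctx (x.map Sum.inr) [] ih2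
    simp only [List.nil_append, List.append_nil] at s2 s3
    rw [List.map_append]
    exact (Relation.ReflTransGen.head s1 s2).trans s3

theorem blockWord_length (k n : ℕ) : (blockWord k n).length = (k + 1) * n := by
  simp [blockWord, List.length_flatMap]

theorem pre_len {u r r' s s' : List ℕ} {n a b : ℕ} (hab : a ≠ b)
    (h : u ++ r = List.replicate n a ++ b :: s)
    (h' : u ++ r' = List.replicate (n + 1) a ++ s') : u.length ≤ n := by
  by_contra hc
  push Not at hc
  have e : u[n]? = some b := by
    rw [← List.getElem?_append_left (l₂ := r) hc, h]
    rw [List.getElem?_append_right (by simp)]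
    simp
  have e' : u[n]? = some a := by
    rw [← List.getElem?_append_left (l₂ := r') hc, h']
    rw [List.getElem?_append_left (by simp)]
    simp
  rw [e] at e'
  exact hab (Option.some.inj e').symm

theorem bw_left (k n : ℕ) (hk : 2 ≤ k) : ∃ s, blockWord k n =
    List.replicate n 0 ++ (List.replicate n 1 ++ s) := by
  obtain ⟨k, rfl⟩ := Nat.exists_eq_add_of_le' hk
  refine ⟨((List.range (k+1)).map (fun i => i + 1 + 1)).flatMap (fun j => List.replicate n j), ?_⟩
  unfold blockWord
  rw [List.range_succ_eq_map, List.range_succ_eq_map]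
  simp [List.flatMap_map]

theorem bw_right (k n : ℕ) (hk : 2 ≤ k) : ∃ s, blockWord k n =
    s ++ List.replicate n (k-1) ++ List.replicate n k := by
  obtain ⟨k, rfl⟩ := Nat.exists_eq_add_of_le' hk
  refine ⟨(List.range (k+1)).flatMap (fun j => List.replicate n j), ?_⟩
  unfold blockWord
  rw [List.range_succ, List.range_succ]
  simp

theorem ctx_len (k n m : ℕ) (hk : 2 ≤ k) (hn : n < m) (u v x y : List ℕ)
    (h : u ++ x ++ v = blockWord k n) (h' : u ++ y ++ v = blockWord k m) :
    u.length ≤ n ∧ v.length ≤ n := by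
  rcases Nat.eq_zero_or_pos n with rfl | hpos
  · have := congrArg List.length h
    rw [blockWord_length] at this
    simp at this
    simp [this]
  obtain ⟨n', hn'⟩ : ∃ n', n = n' + 1 := ⟨n - 1, by omega⟩
  obtain ⟨d, hd⟩ : ∃ d, m = n + 1 + d := ⟨m - n - 1, by omega⟩
  constructor
  · obtain ⟨s, hs⟩ := bw_left k n hk
    obtain ⟨s', hs'⟩ := bw_left k m hk
    refine pre_len (a := 0) (b := 1) (r := x ++ v) (r' := y ++ v)
      (s := List.replicate n' 1 ++ s)
      (s' := List.replicate d 0 ++ (List.replicate m 1 ++ s')) (by simp) ?_ ?_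
    · rw [← List.append_assoc, h, hs, show List.replicate n 1 = 1 :: List.replicate n' 1 by
        rw [hn', List.replicate_succ]]
      simp
    · rw [← List.append_assoc, h', hs', ← List.append_assoc (List.replicate (n+1) 0),
        List.replicate_append_replicate, ← hd]
  · obtain ⟨s, hs⟩ := bw_right k n hk
    obtain ⟨s', hs'⟩ := bw_right k m hk
    rw [← List.length_reverse]
    refine pre_len (a := k) (b := k - 1) (r := (u ++ x).reverse) (r' := (u ++ y).reverse)
      (s := List.replicate n' (k-1) ++ s.reverse)
      (s' := List.replicate d k ++ (List.replicate m (k-1) ++ s'.reverse)) (by omega) ?_ ?_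
    · rw [← List.reverse_append, h, hs, show List.replicate n (k-1) =
        List.replicate n' (k-1) ++ [k-1] by
        rw [hn', List.replicate_succ']]
      simp
    · rw [← List.reverse_append, h', hs', ← List.append_assoc (List.replicate (n+1) k),
        List.replicate_append_replicate, ← hd]
      simp

theorem big_len (k n m : ℕ) (hk : 2 ≤ k) (u v x y : List ℕ) (hxy : y ≠ x)
    (h : u ++ x ++ v = blockWord k n) (h' : u ++ y ++ v = blockWord k m) : n ≤ x.length := by
  have hl := congrArg List.length h
  rw [blockWord_length] at hl
  simp only [List.length_append] at hl
  have h3 : 3 * n ≤ (k + 1) * n := Nat.mul_le_mul_right _ (by omega)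
  rcases lt_trichotomy n m with hc | hc | hc
  · have := ctx_len k n m hk hc u v x y h h'
    omega
  · subst hc
    rw [← h] at h'
    simp at h'
    exact absurd h' hxy
  · have := ctx_len k m n hk hc u v y x h' h
    omega

theorem exists_K (P : List (Rule ℕ)) : ∃ K, ∀ r ∈ P, ∀ x, Gen P r.2 x →
    (∀ x', Gen P r.2 x' → x' = x) → x.length ≤ K := by
  classical
  let f : Rule ℕ → ℕ := fun r => if h : ∃ x, Gen P r.2 x then h.choose.length else 0
  refine ⟨(P.map f).sum, fun r hr x hx hu => ?_⟩
  have h : ∃ x, Gen P r.2 x := ⟨x, hx⟩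
  have e : f r = x.length := by
    simp only [f, dif_pos h]
    rw [hu _ h.choose_spec]
  rw [← e]
  exact List.le_sum_of_mem (List.mem_map_of_mem hr)

theorem bounded (k K : ℕ) (hk : 2 ≤ k) (P : List (Rule ℕ))
    (hK : ∀ r ∈ P, ∀ x, Gen P r.2 x → (∀ x', Gen P r.2 x' → x' = x) → x.length ≤ K)
    (α : SForm ℕ) (w : List ℕ) (h : Gen P α w) : ∀ (u v : List ℕ) (n : ℕ),
    (∀ x, Gen P α x → ∃ m, u ++ x ++ v = blockWord k m) → u ++ w ++ v = blockWord k n →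
    (∃ x, Gen P α x ∧ x ≠ w) → n ≤ K := by
  induction h with
  | nil =>
    rintro u v n _ _ ⟨x, hx, hne⟩
    cases hx
    exact absurd rfl hne
  | term t α w hw ih =>
    rintro u v n hc he ⟨x, hx, hne⟩
    cases hx with
    | term _ _ x hx =>
    refine ih (u ++ [t]) v n (fun y hy => ?_) (by simpa using he) ⟨x, hx, by simpa using hne⟩
    obtain ⟨m, hm⟩ := hc _ (Gen.term t _ _ hy)
    exact ⟨m, by simpa using hm⟩
  | nt A β α x w hr hb hw ihb ihw =>
    rintro u v n hc he ⟨z, hz, hne⟩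
    by_cases h1 : ∃ y, Gen P α y ∧ y ≠ w
    · refine ihw (u ++ x) v n (fun y hy => ?_) (by simpa using he) h1
      obtain ⟨m, hm⟩ := hc _ (Gen.nt _ _ _ _ _ hr hb hy)
      exact ⟨m, by simpa using hm⟩
    push Not at h1
    have hc' : ∀ γ, (A, γ) ∈ P → ∀ y, Gen P γ y → ∃ m, u ++ y ++ (w ++ v) = blockWord k m := by
      intro γ hγ y hy
      obtain ⟨m, hm⟩ := hc _ (Gen.nt _ _ _ _ _ hγ hy hw)
      exact ⟨m, by simpa using hm⟩
    by_cases h2 : ∃ y, Gen P β y ∧ y ≠ x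
    · exact ihb u (w ++ v) n (hc' β hr) (by simpa using he) h2
    push Not at h2
    have hx := hK _ hr x hb h2
    cases hz with
    | nt _ γ _ y w' hγ hy hw' =>
    have := h1 _ hw'
    subst this
    obtain ⟨m, hm⟩ := hc' γ hγ y hy
    refine le_trans (big_len k n m hk u (w' ++ v) x y (fun e => hne (by rw [e])) ?_ hm) hx
    simpa using he

theorem bw_ne_nil (k n : ℕ) (hn : 1 ≤ n) : blockWord k n ≠ [] := by
  intro h
  have := congrArg List.length h
  rw [blockWord_length] at this
  simp at this
  omega

theorem not_cf (k : ℕ) (hk : 2 ≤ k) : blockLang k ∉ CFFam ℕ := by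
  rintro ⟨G, hG⟩
  obtain ⟨K, hK⟩ := exists_K G.rules
  have hin : ∀ n, 1 ≤ n → Gen G.rules [Sum.inl G.start] (blockWord k n) := by
    intro n hn
    have : blockWord k n ∈ blockLang k \ {[]} := ⟨⟨n, hn, rfl⟩, bw_ne_nil k n hn⟩
    rw [← hG] at this
    exact Gen.of_steps this.1
  have := bounded k K hk G.rules hK _ _ (hin (K + 1) (by omega)) [] [] (K + 1) ?_ (by simp)
    ⟨_, hin (K + 2) (by omega), ?_⟩
  · omega
  · intro x hx
    by_cases h0 : x = []
    · exact ⟨0, by simp [h0, blockWord]⟩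
    · have hm : x ∈ G.lang \ {[]} := ⟨hx.steps, h0⟩
      rw [hG] at hm
      obtain ⟨n, _, rfl⟩ := hm.1
      exact ⟨n, by simp⟩
  · intro e
    have := congrArg List.length e
    rw [blockWord_length, blockWord_length] at this
    have := Nat.eq_of_mul_eq_mul_left (by omega) this
    omega

/-! Part 2: the grammar system. -/

def tl (k i n : ℕ) : SForm ℕ := if i + 1 = k then List.replicate n (Sum.inr k) else []

def nts (i c : ℕ) : SForm ℕ :=
  if c = 0 then [Sum.inl (2 * i + 1)] else if c = 1 then [Sum.inl (2 * i + 2)] else []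

def blk (k i : ℕ) (s : ℕ × ℕ) : SForm ℕ :=
  List.replicate s.1 (Sum.inr i) ++ nts i s.2 ++ tl k i s.1

def formL (k : ℕ) (L : List ℕ) (s : ℕ → ℕ × ℕ) : SForm ℕ := L.flatMap (fun i => blk k i (s i))

def form (k : ℕ) (s : ℕ → ℕ × ℕ) : SForm ℕ := formL k (List.range k) s

def P1 (k : ℕ) : List (Rule ℕ) := (List.range k).flatMap (fun i =>
  [(2 * i + 1, Sum.inr i :: (nts i 1 ++ tl k i 1)), (2 * i + 1, Sum.inr i :: (nts i 2 ++ tl k i 1))])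

def P2 (k : ℕ) : List (Rule ℕ) :=
  (0, [Sum.inl 0]) :: (0, (List.range k).map (fun i => Sum.inl (2 * i + 1))) ::
    (List.range k).map (fun i => (2 * i + 2, nts i 0))

def GG (k : ℕ) : CDGS ℕ where
  deg := 2
  start := 0
  comp := fun i => if i = 0 then P1 k else P2 k

theorem formL_congr (k : ℕ) (L : List ℕ) (s s' : ℕ → ℕ × ℕ) (h : ∀ i ∈ L, s i = s' i) :
    formL k L s = formL k L s' := by
  induction L with
  | nil => rfl
  | cons a L ih =>
    simp only [formL, List.flatMap_cons] at *
    rw [h a (by simp), ih (fun i hi => h i (by simp [hi]))]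

theorem form_congr (k : ℕ) (s s' : ℕ → ℕ × ℕ) (h : ∀ i < k, s i = s' i) :
    form k s = form k s' := formL_congr _ _ _ _ (by simpa using h)

theorem formL_ctx (k : ℕ) (L : List ℕ) (hL : L.Nodup) (s : ℕ → ℕ × ℕ) (i : ℕ) (hi : i ∈ L) :
    ∃ U V, ∀ t, formL k L (Function.update s i t) = U ++ blk k i t ++ V := by
  induction L with
  | nil => simp at hi
  | cons a L ih =>
    rw [List.nodup_cons] at hL
    by_cases h : a = i
    · subst h
      refine ⟨[], formL k L s, fun t => ?_⟩
      rw [← formL_congr k L (Function.update s a t) s]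
      · simp [formL]
      · intro j hj
        rw [Function.update_of_ne]
        rintro rfl
        exact hL.1 hj
    · have hi' : i ∈ L := by
        rcases List.mem_cons.1 hi with h' | h'
        · exact absurd h'.symm h
        · exact h'
      obtain ⟨U, V, hUV⟩ := ih hL.2 hi'
      refine ⟨blk k a (s a) ++ U, V, fun t => ?_⟩
      have := hUV t
      simp only [formL, List.flatMap_cons] at this ⊢
      rw [this, Function.update_of_ne h]
      simp

def NtOK (i c X : ℕ) : Prop := (c = 0 ∧ X = 2 * i + 1) ∨ (c = 1 ∧ X = 2 * i + 2)

theorem nts_of_ok {i c X : ℕ} (h : NtOK i c X) : nts i c = [Sum.inl X] := by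
  rcases h with ⟨rfl, rfl⟩ | ⟨rfl, rfl⟩ <;> simp [nts]

theorem notmem_tl (k i n X : ℕ) : (Sum.inl X : Symb ℕ) ∉ tl k i n := by
  unfold tl; split_ifs <;> simp [List.mem_replicate]

theorem mem_nts {i c X : ℕ} (h : (Sum.inl X : Symb ℕ) ∈ nts i c) : NtOK i c X := by
  unfold nts at h
  unfold NtOK
  split_ifs at h <;> simp_all

theorem mem_blk {k i X : ℕ} {t : ℕ × ℕ} (h : (Sum.inl X : Symb ℕ) ∈ blk k i t) :
    NtOK i t.2 X := by
  unfold blk at h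
  rw [List.mem_append, List.mem_append] at h
  rcases h with (h | h) | h
  · simp [List.mem_replicate] at h
  · exact mem_nts h
  · exact absurd h (notmem_tl _ _ _ _)

theorem split_uniq {α : Type} {x : α} {p q u v : List α} (hp : x ∉ p) (hq : x ∉ q)
    (h : p ++ x :: q = u ++ x :: v) : u = p ∧ v = q := by
  induction p generalizing u with
  | nil =>
    cases u with
    | nil => simp_all
    | cons a u =>
      simp at h
      exact absurd (by rw [h.2]; simp) hq
  | cons b p ih =>
    cases u with
    | nil => simp at h; simp [h.1] at hp
    | cons a u =>
      simp at h hp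
      obtain ⟨h1, h2⟩ := ih hp.2 h.2
      simp [h1, h2, h.1]

theorem mem_formL {k : ℕ} {L : List ℕ} {s : ℕ → ℕ × ℕ} {X : ℕ}
    (h : (Sum.inl X : Symb ℕ) ∈ formL k L s) : ∃ i ∈ L, NtOK i (s i).2 X := by
  simp only [formL, List.mem_flatMap] at h
  obtain ⟨i, hi, h⟩ := h
  exact ⟨i, hi, mem_blk h⟩

theorem NtOK.inj {i j c d X : ℕ} (h : NtOK i c X) (h' : NtOK j d X) : i = j ∧ c = d := by
  unfold NtOK at *; omega

theorem formL_split (k : ℕ) (L : List ℕ) (hL : L.Nodup) (s : ℕ → ℕ × ℕ) (u v : SForm ℕ) (X : ℕ)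
    (h : formL k L s = u ++ Sum.inl X :: v) : ∃ i ∈ L, NtOK i (s i).2 X ∧
    ∃ U V, u = U ++ List.replicate (s i).1 (Sum.inr i) ∧ v = tl k i (s i).1 ++ V ∧
    ∀ t, formL k L (Function.update s i t) = U ++ blk k i t ++ V := by
  induction L generalizing u with
  | nil => simp [formL] at h
  | cons a L ih =>
    have hL' := List.nodup_cons.1 hL
    have hf : ∀ s, formL k (a :: L) s = blk k a (s a) ++ formL k L s := fun s => by simp [formL]
    rw [hf] at h
    by_cases hX : NtOK a (s a).2 X
    · refine ⟨a, by simp, hX, [], formL k L s, ?_⟩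
      have hn : (Sum.inl X : Symb ℕ) ∉ formL k L s := by
        intro hm
        obtain ⟨j, hj, hj'⟩ := mem_formL hm
        obtain ⟨rfl, _⟩ := hX.inj hj'
        exact hL'.1 hj
      have h2 : List.replicate (s a).1 (Sum.inr a : Symb ℕ) ++
          Sum.inl X :: (tl k a (s a).1 ++ formL k L s) = u ++ Sum.inl X :: v := by
        rw [← h, blk, nts_of_ok hX]; simp
      obtain ⟨e1, e2⟩ := split_uniq (by simp [List.mem_replicate])
        (by simp [hn, notmem_tl]) h2
      refine ⟨by simp [e1], e2, fun t => ?_⟩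
      rw [hf, formL_congr k L (Function.update s a t) s]
      · simp
      · intro j hj
        rw [Function.update_of_ne]
        rintro rfl
        exact hL'.1 hj
    · have hnb : (Sum.inl X : Symb ℕ) ∉ blk k a (s a) := fun hm => hX (mem_blk hm)
      rw [List.append_eq_append_iff] at h
      have : ∃ u', u = blk k a (s a) ++ u' ∧ formL k L s = u' ++ Sum.inl X :: v := by
        rcases h with ⟨u', h1, h2⟩ | ⟨c, h1, h2⟩
        · exact ⟨u', h1, h2⟩
        · cases c with
          | nil => exact ⟨[], by simpa using h1.symm, by simpa using h2.symm⟩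
          | cons b c =>
            simp at h2
            exact absurd (by rw [h1, h2.1]; simp) hnb
      obtain ⟨u', rfl, h2⟩ := this
      obtain ⟨i, hi, hok, U, V, rfl, rfl, ht⟩ := ih hL'.2 u' h2
      refine ⟨i, by simp [hi], hok, blk k a (s a) ++ U, V, by simp, rfl, fun t => ?_⟩
      rw [hf, ht, Function.update_of_ne]
      · simp
      · rintro rfl
        exact hL'.1 hi

theorem tl_succ (k i n : ℕ) : tl k i 1 ++ tl k i n = tl k i (n + 1) := by
  unfold tl
  split_ifs
  · rw [List.replicate_append_replicate, Nat.add_comm]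
  · rfl

theorem P1_step {k : ℕ} {s : ℕ → ℕ × ℕ} {y : SForm ℕ} : RStep (P1 k) (form k s) y ↔
    ∃ i < k, (s i).2 = 0 ∧ ∃ c, (c = 1 ∨ c = 2) ∧
      y = form k (Function.update s i ((s i).1 + 1, c)) := by
  have key : ∀ (U V : SForm ℕ) i n c, U ++ List.replicate n (Sum.inr i) ++
      (Sum.inr i :: (nts i c ++ tl k i 1)) ++ (tl k i n ++ V) = U ++ blk k i (n + 1, c) ++ V := by
    intro U V i n c
    simp only [blk]
    rw [List.replicate_succ', ← tl_succ k i n]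
    simp
  constructor
  · rintro ⟨r, hr, u, v, h1, rfl⟩
    obtain ⟨i, hi, hok, U, V, rfl, rfl, ht⟩ := formL_split k _ List.nodup_range s u v _ h1
    simp only [P1, List.mem_flatMap, List.mem_range, List.mem_cons, List.not_mem_nil, or_false] at hr
    obtain ⟨j, hj, hr⟩ := hr
    have hr' : ∃ c, (c = 1 ∨ c = 2) ∧ r = (2 * j + 1, Sum.inr j :: (nts j c ++ tl k j 1)) := by
      rcases hr with rfl | rfl
      · exact ⟨1, by simp⟩
      · exact ⟨2, by simp⟩
    obtain ⟨c, hc, rfl⟩ := hr'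
    obtain ⟨rfl, h0⟩ := hok.inj (j := j) (d := 0) (Or.inl ⟨rfl, rfl⟩)
    refine ⟨i, hj, h0, c, hc, ?_⟩
    rw [form, ht, ← key]
  · rintro ⟨i, hi, h0, c, hc, rfl⟩
    obtain ⟨U, V, ht⟩ := formL_ctx k _ List.nodup_range s i (List.mem_range.2 hi)
    refine ⟨(2 * i + 1, Sum.inr i :: (nts i c ++ tl k i 1)), ?_,
      U ++ List.replicate (s i).1 (Sum.inr i), tl k i (s i).1 ++ V, ?_, ?_⟩
    · simp only [P1, List.mem_flatMap, List.mem_range]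
      exact ⟨i, hi, by rcases hc with rfl | rfl <;> simp⟩
    · have := ht (s i)
      rw [Function.update_eq_self] at this
      rw [form, this, blk, h0]
      simp [nts]
    · rw [form, ht, ← key]

theorem P2_step {k : ℕ} {s : ℕ → ℕ × ℕ} {y : SForm ℕ} : RStep (P2 k) (form k s) y ↔
    ∃ i < k, (s i).2 = 1 ∧ y = form k (Function.update s i ((s i).1, 0)) := by
  have key : ∀ (U V : SForm ℕ) i n c, U ++ List.replicate n (Sum.inr i) ++
      nts i c ++ (tl k i n ++ V) = U ++ blk k i (n, c) ++ V := by
    intro U V i n c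
    simp [blk]
  constructor
  · rintro ⟨r, hr, u, v, h1, rfl⟩
    obtain ⟨i, hi, hok, U, V, rfl, rfl, ht⟩ := formL_split k _ List.nodup_range s u v _ h1
    simp only [P2, List.mem_cons, List.mem_map, List.mem_range] at hr
    rcases hr with rfl | rfl | ⟨j, hj, rfl⟩
    · simp [NtOK] at hok
    · simp [NtOK] at hok
    obtain ⟨rfl, h0⟩ := hok.inj (j := j) (d := 1) (Or.inr ⟨rfl, rfl⟩)
    refine ⟨i, hj, h0, ?_⟩
    rw [form, ht, ← key]
  · rintro ⟨i, hi, h0, rfl⟩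
    obtain ⟨U, V, ht⟩ := formL_ctx k _ List.nodup_range s i (List.mem_range.2 hi)
    refine ⟨(2 * i + 2, nts i 0), ?_,
      U ++ List.replicate (s i).1 (Sum.inr i), tl k i (s i).1 ++ V, ?_, ?_⟩
    · simp only [P2, List.mem_cons, List.mem_map, List.mem_range]
      exact Or.inr (Or.inr ⟨i, hi, rfl⟩)
    · have := ht (s i)
      rw [Function.update_eq_self] at this
      rw [form, this, blk, h0]
      simp [nts]
    · rw [form, ht, ← key]

theorem stepsN_inv {T : Type} {P : List (Rule T)} (I : SForm T → Prop)
    (h : ∀ x y, I x → RStep P x y → I y) (m : ℕ) (x y : SForm T) (hx : I x)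
    (hs : StepsN P m x y) : I y := by
  induction m generalizing x with
  | zero => exact hs ▸ hx
  | succ m ih =>
    obtain ⟨z, h1, h2⟩ := hs
    exact ih z (h _ _ hx h1) h2

theorem form_start (k : ℕ) : form k (fun _ => (0, 0)) =
    (List.range k).map (fun i => Sum.inl (2 * i + 1)) := by
  unfold form formL
  rw [List.map_eq_flatMap]
  congr 1
  funext i
  simp [blk, nts, tl]

theorem form_final (k n : ℕ) (hk : 2 ≤ k) : form k (fun _ => (n, 2)) =
    (blockWord k n).map Sum.inr := by
  obtain ⟨k, rfl⟩ := Nat.exists_eq_add_of_le' hk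
  unfold form formL blockWord
  rw [List.range_succ (n := k + 1 + 1), List.range_succ (n := k + 1)]
  simp only [List.flatMap_append, List.map_append, List.flatMap_singleton, List.map_flatMap,
    List.map_replicate]
  have : (List.range (k+1)).flatMap (fun i => blk (k + 2) i (n, 2)) =
      (List.range (k+1)).flatMap (fun i => List.replicate n (Sum.inr i)) := by
    apply List.flatMap_congr
    intro i hi
    rw [List.mem_range] at hi
    have : ¬ i = k + 1 := by omega
    simp [blk, nts, tl, this]
  rw [this]
  simp [blk, nts, tl]

theorem P2_count {k : ℕ} (m : ℕ) (s : ℕ → ℕ × ℕ) (y : SForm ℕ)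
    (h : StepsN (P2 k) m (form k s) y) :
    m ≤ ((Finset.range k).filter (fun i => (s i).2 = 1)).card := by
  induction m generalizing s with
  | zero => simp
  | succ m ih =>
    obtain ⟨z, h1, h2⟩ := h
    obtain ⟨i, hi, h0, rfl⟩ := P2_step.1 h1
    refine lt_of_le_of_lt (ih _ h2) (Finset.card_lt_card ?_)
    rw [Finset.ssubset_iff_of_subset]
    · exact ⟨i, by simp [hi, h0], by simp⟩
    · intro j
      simp only [Finset.mem_filter]
      rintro ⟨hj, hj'⟩
      refine ⟨hj, ?_⟩
      by_cases e : j = i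
      · subst e; exact h0
      · rwa [Function.update_of_ne e] at hj'

def JJ (k : ℕ) (x : SForm ℕ) : Prop :=
  x = [Sum.inl 0] ∨ (∃ n, x = form k (fun _ => (n, 0))) ∨
  ∃ n s, x = form k s ∧ ∀ i < k, s i = (n + 1, 1) ∨ s i = (n + 1, 2)

theorem no_pos {T : Type} {P : List (Rule T)} {x y : SForm T} {m : ℕ} (hm : 1 ≤ m)
    (h : StepsN P m x y) : ∃ z, RStep P x z := by
  obtain ⟨m, rfl⟩ := Nat.exists_eq_add_of_le' hm
  obtain ⟨z, h, _⟩ := h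
  exact ⟨z, h⟩

theorem S_split {u v : SForm ℕ} {X : ℕ} (h : ([Sum.inl 0] : SForm ℕ) = u ++ Sum.inl X :: v) :
    X = 0 ∧ u = [] ∧ v = [] := by
  cases u with
  | nil => simp at h; simp [h.1, h.2]
  | cons a u => simp at h

theorem JJ_P1 {k m : ℕ} (hk : 2 ≤ k) {x y : SForm ℕ} (hx : JJ k x) (h : StepsN (P1 k) m x y)
    (hm : k ≤ m) (ht : ¬ ∃ z, RStep (P1 k) y z) : JJ k y := by
  obtain ⟨z, hz⟩ := no_pos (by omega) h
  rcases hx with rfl | ⟨n, rfl⟩ | ⟨n, s, rfl, hs⟩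
  · obtain ⟨r, hr, u, v, h1, -⟩ := hz
    obtain ⟨h0, -, -⟩ := S_split h1
    simp only [P1, List.mem_flatMap, List.mem_cons, List.not_mem_nil, or_false] at hr
    obtain ⟨j, -, rfl | rfl⟩ := hr <;> simp at h0
  · obtain ⟨s, rfl, hs⟩ := stepsN_inv (P := P1 k) (fun x => ∃ s, x = form k s ∧
      ∀ i < k, s i = (n, 0) ∨ s i = (n + 1, 1) ∨ s i = (n + 1, 2)) (by
        rintro _ y ⟨s, rfl, hs⟩ hy
        obtain ⟨i, hi, h0, c, hc, rfl⟩ := P1_step.1 hy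
        refine ⟨_, rfl, fun j hj => ?_⟩
        by_cases e : j = i
        · subst e
          rw [Function.update_self]
          have := hs j hj
          rcases this with e | e | e <;> simp_all
        · rw [Function.update_of_ne e]
          exact hs j hj) m _ _ ⟨_, rfl, fun i _ => Or.inl rfl⟩ h
    refine Or.inr (Or.inr ⟨n, s, rfl, fun i hi => ?_⟩)
    rcases hs i hi with e | e
    · exact absurd ⟨_, P1_step.2 ⟨i, hi, by rw [e], 1, Or.inl rfl, rfl⟩⟩ ht
    · exact e
  · obtain ⟨i, hi, h0, -⟩ := P1_step.1 hz
    rcases hs i hi with e | e <;> simp [e] at h0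

theorem JJ_P2 {k m : ℕ} (hk : 2 ≤ k) {x y : SForm ℕ} (hx : JJ k x) (h : StepsN (P2 k) m x y)
    (hm : k ≤ m) (ht : ¬ ∃ z, RStep (P2 k) y z) : JJ k y := by
  obtain ⟨z, hz⟩ := no_pos (by omega) h
  rcases hx with rfl | ⟨n, rfl⟩ | ⟨n, s, rfl, hs⟩
  · have := stepsN_inv (P := P2 k) (fun x => x = [Sum.inl 0] ∨ x = form k (fun _ => (0, 0))) (by
        rintro _ y (rfl | rfl) hy
        · obtain ⟨r, hr, u, v, h1, rfl⟩ := hy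
          obtain ⟨h0, rfl, rfl⟩ := S_split h1
          simp only [P2, List.mem_cons, List.mem_map, List.mem_range] at hr
          rcases hr with rfl | rfl | ⟨j, hj, rfl⟩
          · simp
          · right; simp [form_start]
          · simp at h0
        · obtain ⟨i, hi, h0, -⟩ := P2_step.1 hy
          simp at h0) m _ _ (Or.inl rfl) h
    rcases this with rfl | rfl
    · exact Or.inl rfl
    · exact Or.inr (Or.inl ⟨0, rfl⟩)
  · obtain ⟨i, hi, h0, -⟩ := P2_step.1 hz
    simp at h0
  · have hc := P2_count m s y h
    have hle := Finset.card_filter_le (Finset.range k) (fun i => (s i).2 = 1)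
    rw [Finset.card_range] at hle
    have hall : ∀ i ∈ Finset.range k, (s i).2 = 1 := by
      rw [← Finset.card_filter_eq_iff, Finset.card_range]
      omega
    obtain ⟨s', rfl, hs'⟩ := stepsN_inv (P := P2 k) (fun x => ∃ s, x = form k s ∧
      ∀ i < k, s i = (n + 1, 1) ∨ s i = (n + 1, 0)) (by
        rintro _ y ⟨s, rfl, hs⟩ hy
        obtain ⟨i, hi, h0, rfl⟩ := P2_step.1 hy
        refine ⟨_, rfl, fun j hj => ?_⟩
        by_cases e : j = i
        · subst e
          rw [Function.update_self]
          rcases hs j hj with e | e <;> simp_all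
        · rw [Function.update_of_ne e]
          exact hs j hj) m _ _ ⟨s, rfl, fun i hi => by
            have := hall i (by simpa using hi)
            rcases hs i hi with e | e
            · exact Or.inl e
            · simp [e] at this⟩ h
    refine Or.inr (Or.inl ⟨n + 1, form_congr _ _ _ fun i hi => ?_⟩)
    rcases hs' i hi with e | e
    · exact absurd ⟨_, P2_step.2 ⟨i, hi, by rw [e], rfl⟩⟩ ht
    · exact e

theorem ok_mem_form {k : ℕ} {s : ℕ → ℕ × ℕ} {i X : ℕ} (hi : i < k) (h : NtOK i (s i).2 X) :
    (Sum.inl X : Symb ℕ) ∈ form k s := by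
  simp only [form, formL, List.mem_flatMap, List.mem_range]
  exact ⟨i, hi, by simp [blk, nts_of_ok h]⟩

theorem sound (k : ℕ) (hk : 2 ≤ k) :
    (GG k).lang (Mode.conj Mode.t (Mode.ge k)) ⊆ blockLang k := by
  intro w hw
  have hJ : JJ k (w.map Sum.inr) := by
    have : ∀ y, Relation.TransGen ((GG k).ModeStep (Mode.conj Mode.t (Mode.ge k)))
        [Sum.inl (GG k).start] y → JJ k y := by
      have hstep : ∀ x y, JJ k x → (GG k).ModeStep (Mode.conj Mode.t (Mode.ge k)) x y → JJ k y := by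
        rintro x y hx ⟨i, m, h1, h2, h3⟩
        simp only [modeOK, GG] at h1 h2 h3
        split_ifs at h1 h2
        · exact JJ_P1 hk hx h1 h3 h2
        · exact JJ_P2 hk hx h1 h3 h2
      intro y hy
      induction hy with
      | single h => exact hstep _ _ (Or.inl rfl) h
      | tail _ h ih => exact hstep _ _ ih h
    exact this _ hw
  have hnt : ∀ X, (Sum.inl X : Symb ℕ) ∉ w.map Sum.inr := by simp
  rcases hJ with h | ⟨n, h⟩ | ⟨n, s, h, hs⟩
  · exact absurd (by rw [h]; simp) (hnt 0)
  · exact absurd (by rw [h]; exact ok_mem_form (i := 0) (by omega) (Or.inl ⟨rfl, rfl⟩)) (hnt 1)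
  · refine ⟨n + 1, by omega, ?_⟩
    rw [form_congr k s (fun _ => (n + 1, 2)), form_final k _ hk] at h
    · exact List.map_injective_iff.2 Sum.inr_injective h
    · intro i hi
      rcases hs i hi with e | e
      · exact absurd (by rw [h]; exact ok_mem_form hi (Or.inr ⟨by rw [e], rfl⟩)) (hnt (2 * i + 2))
      · exact e

theorem sweep (k : ℕ) (P : List (Rule ℕ)) (a b : ℕ × ℕ)
    (h : ∀ s i, i < k → s i = a → RStep P (form k s) (form k (Function.update s i b))) :
    StepsN P k (form k fun _ => a) (form k fun _ => b) := by
  have : ∀ d ≤ k, StepsN P d (form k fun i => if i < k - d then b else a) (form k fun _ => b) := by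
    intro d
    induction d with
    | zero =>
      intro _
      exact form_congr _ _ _ fun i hi => by simp [hi]
    | succ d ih =>
      intro hd
      refine ⟨_, h _ (k - (d + 1)) (by omega) (by simp), ?_⟩
      rw [form_congr k _ (fun i => if i < k - d then b else a)]
      · exact ih (by omega)
      · intro i hi
        by_cases e : i = k - (d + 1)
        · subst e
          rw [Function.update_self, if_pos (by omega)]
        · rw [Function.update_of_ne e]
          by_cases e' : i < k - d
          · rw [if_pos e', if_pos (by omega)]
          · rw [if_neg e', if_neg (by omega)]
  have := this k le_rfl
  simpa using this

theorem ms1 (k n c : ℕ) (hc : c = 1 ∨ c = 2) :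
    (GG k).ModeStep (Mode.conj Mode.t (Mode.eq k))
      (form k fun _ => (n, 0)) (form k fun _ => (n + 1, c)) := by
  refine ⟨(0 : Fin 2), k, sweep k (P1 k) _ _ fun s i hi hs => ?_, ?_, rfl⟩
  · exact P1_step.2 ⟨i, hi, by rw [hs], c, hc, by rw [hs]⟩
  · rintro ⟨z, hz⟩
    obtain ⟨i, hi, h0, -⟩ := P1_step.1 (show RStep (P1 k) _ _ from hz)
    simp only at h0
    omega

theorem ms2 (k n : ℕ) :
    (GG k).ModeStep (Mode.conj Mode.t (Mode.eq k))
      (form k fun _ => (n, 1)) (form k fun _ => (n, 0)) := by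
  refine ⟨(1 : Fin 2), k, sweep k (P2 k) _ _ fun s i hi hs => ?_, ?_, rfl⟩
  · exact P2_step.2 ⟨i, hi, by rw [hs], by rw [hs]⟩
  · rintro ⟨z, hz⟩
    obtain ⟨i, hi, h0, -⟩ := P2_step.1 (show RStep (P2 k) _ _ from hz)
    simp only at h0
    omega

theorem ms0 (k : ℕ) (hk : 2 ≤ k) :
    (GG k).ModeStep (Mode.conj Mode.t (Mode.eq k)) [Sum.inl 0] (form k fun _ => (0, 0)) := by
  have : ∀ m, StepsN (P2 k) (m + 1) [Sum.inl 0] (form k fun _ => (0, 0)) := by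
    intro m
    induction m with
    | zero =>
      refine ⟨_, ⟨(0, (List.range k).map (fun i => Sum.inl (2 * i + 1))), by simp [P2],
        [], [], rfl, rfl⟩, ?_⟩
      simp [StepsN, form_start]
    | succ m ih =>
      exact ⟨[Sum.inl 0], ⟨(0, [Sum.inl 0]), by simp [P2], [], [], rfl, rfl⟩, ih⟩
  refine ⟨(1 : Fin 2), k, ?_, ?_, rfl⟩
  · have h := this (k - 1)
    rw [Nat.sub_add_cancel (by omega)] at h
    exact h
  · rintro ⟨z, hz⟩
    obtain ⟨i, hi, h0, -⟩ := P2_step.1 (show RStep (P2 k) _ _ from hz)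
    simp only at h0
    omega

theorem complete (k : ℕ) (hk : 2 ≤ k) :
    blockLang k ⊆ (GG k).lang (Mode.conj Mode.t (Mode.eq k)) := by
  rintro w ⟨n, hn, rfl⟩
  obtain ⟨n, rfl⟩ := Nat.exists_eq_add_of_le' hn
  have : ∀ n, Relation.TransGen ((GG k).ModeStep (Mode.conj Mode.t (Mode.eq k)))
      [Sum.inl 0] (form k fun _ => (n, 0)) := by
    intro n
    induction n with
    | zero => exact .single (ms0 k hk)
    | succ n ih => exact (ih.tail (ms1 k n 1 (Or.inl rfl))).tail (ms2 k (n + 1))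
  have h := (this n).tail (ms1 k n 2 (Or.inr rfl))
  rw [form_final k _ hk] at h
  exact h

theorem eq_sub_ge (k : ℕ) : (GG k).lang (Mode.conj Mode.t (Mode.eq k)) ⊆
    (GG k).lang (Mode.conj Mode.t (Mode.ge k)) := by
  intro w hw
  refine Relation.TransGen.mono ?_ _ _ hw
  rintro x y ⟨i, m, h1, h2, h3⟩
  exact ⟨i, m, h1, h2, le_of_eq (Eq.symm h3)⟩

theorem GG_lf (k : ℕ) (hk : 2 ≤ k) : (GG k).LamFree := by
  intro i r hr
  simp only [GG] at hr
  split_ifs at hr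
  · simp only [P1, List.mem_flatMap, List.mem_cons, List.not_mem_nil, or_false] at hr
    obtain ⟨j, -, rfl | rfl⟩ := hr <;> simp
  · simp only [P2, List.mem_cons, List.mem_map, List.mem_range] at hr
    rcases hr with rfl | rfl | ⟨j, hj, rfl⟩
    · simp
    · simp; omega
    · simp [nts]

/-- For every k ≥ 2, the (non-context-free) language
L = { a_1^n a_2^n ⋯ a_{k+1}^n | n ≥ 1 } belongs both to L(CD_2, CF−λ, (t∧≥k))
and to L(CD_2, CF−λ, (t∧=k)). -/
theorem stmt5 (k : ℕ) (hk : 2 ≤ k) :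
    blockLang k ∉ CFFam ℕ ∧
    blockLang k ∈ CDFam ℕ true 2 (Mode.conj Mode.t (Mode.ge k)) ∧
    blockLang k ∈ CDFam ℕ true 2 (Mode.conj Mode.t (Mode.eq k)) := by
  refine ⟨not_cf k hk, ⟨GG k, le_rfl, fun _ => GG_lf k hk, ?_⟩,
    ⟨GG k, le_rfl, fun _ => GG_lf k hk, ?_⟩⟩
  · rw [EqL, (sound k hk).antisymm ((complete k hk).trans (eq_sub_ge k))]
  · rw [EqL, ((eq_sub_ge k).trans (sound k hk)).antisymm (complete k hk)]

end CDHybrid
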